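/- arXiv:0804.3051 — 2 statements merged into one kernel-verified Lean document; each statement's English description precedes it below -/
import Mathlib

section
/- Let Ω ⊂ ℝⁿ be open, 1 < p < ∞, 1 ≤ q ≤ p, a > 1, and Φ : [0,∞) → [0,∞) an increasing convex function with Φ(0) = 0. Then there exists a constant c(a,p,q) such that for every compactly supported Lipschitz function φ on Ω, with M_t = {|φ| > t}: ∫_0^∞ Φ(t^p cap_{p,q}(closure(M_{at}), M_t)) dt/t ≤ Φ(c(a,p,q) ‖∇φ‖_{L^{p,q}(Ω, mₙ; ℝⁿ)}^p) · log a. In particular Φ^{-1} of the left side is bounded by c(a,p,q)‖∇φ‖_{L^{p,q}}^p. -/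
open MeasureTheory Set
open scoped ENNReal

/-- The distribution function `μ_{[f]}(s) = μ({|f| > s})`. -/
noncomputable def distribFn {α : Type*} [MeasurableSpace α] (μ : Measure α)
    (f : α → ℝ) (s : ℝ) : ℝ≥0∞ :=
  μ {x | s < |f x|}

/-- The Lorentz `p,q`-(quasi)norm, `1 < p < ∞`, `1 ≤ q ≤ ∞`, expressed through the
distribution function. -/
noncomputable def lorentzNorm {α : Type*} [MeasurableSpace α] (μ : Measure α)
    (p : ℝ) (q : ℝ≥0∞) (f : α → ℝ) : ℝ≥0∞ :=
  if q = ⊤ then ⨆ s : Ioi (0 : ℝ), ENNReal.ofReal s.1 * distribFn μ f s.1 ^ (1 / p)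
  else (ENNReal.ofReal p *
      ∫⁻ s in Ioi (0 : ℝ),
        ENNReal.ofReal (s ^ (q.toReal - 1)) * distribFn μ f s ^ (q.toReal / p)) ^ (1 / q.toReal)

/-- Admissible functions for the conductor `(K, Ω)`: Lipschitz, compactly supported
in `Ω`, and `≥ 1` in a neighborhood of `K`. -/
def admissible {n : ℕ} (K Ω : Set (Fin n → ℝ)) : Set ((Fin n → ℝ) → ℝ) :=
  {u | (∃ c, LipschitzWith c u) ∧ HasCompactSupport u ∧ tsupport u ⊆ Ω ∧
    K ⊆ interior {x | 1 ≤ u x}}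

/-- The Sobolev–Lorentz `p,q`-capacitance of the conductor `(K, Ω)`:
`cap_{p,q}(K, Ω) = inf { ‖∇u‖_{L^{p,q}(Ω, mₙ; ℝⁿ)}^p : u ∈ W(K, Ω) }`. -/
noncomputable def capacitance (n : ℕ) (p : ℝ) (q : ℝ≥0∞)
    (K Ω : Set (Fin n → ℝ)) : ℝ≥0∞ :=
  ⨅ u ∈ admissible K Ω,
    lorentzNorm (volume.restrict Ω) p q (fun x => ‖fderiv ℝ u x‖) ^ p

lemma aux_sum_lintegral_le {α ι : Type*} [MeasurableSpace α] (ν : Measure α) (s : Finset ι)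
    (g : ι → α → ℝ≥0∞) : ∑ i ∈ s, ∫⁻ x, g i x ∂ν ≤ ∫⁻ x, ∑ i ∈ s, g i x ∂ν := by
  classical
  induction s using Finset.induction_on with
  | empty => simp
  | insert i s hi ih =>
    rw [Finset.sum_insert hi]
    calc _ ≤ ∫⁻ x, g i x ∂ν + ∫⁻ x, ∑ i ∈ s, g i x ∂ν := by gcongr
      _ ≤ ∫⁻ x, (g i x + ∑ i ∈ s, g i x) ∂ν := le_lintegral_add _ _
      _ = _ := by
        congr 1; ext x; rw [Finset.sum_insert hi]

lemma aux_mink {α ι : Type*} [MeasurableSpace α] (ν : Measure α) (s : Finset ι)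
    (g : ι → α → ℝ≥0∞) (h : α → ℝ≥0∞) (r : ℝ) (hr : 1 ≤ r)
    (hg : ∀ x, ∑ i ∈ s, g i x ^ r ≤ h x ^ r) (hfin : ∀ i ∈ s, ∫⁻ x, g i x ∂ν ≠ ⊤) :
    ∑ i ∈ s, (∫⁻ x, g i x ∂ν) ^ r ≤ (∫⁻ x, h x ∂ν) ^ r := by
  rcases hr.eq_or_lt with rfl | hr1
  · simp only [ENNReal.rpow_one] at *
    exact (aux_sum_lintegral_le ν s g).trans (lintegral_mono hg)
  have hr0 : 0 < r := by linarith
  have hc : (r / (r - 1)).HolderConjugate r := (Real.HolderConjugate.conjExponent hr1).symm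
  have hc0 : 0 < r / (r - 1) := hc.pos
  set G : ι → ℝ≥0∞ := fun i => ∫⁻ x, g i x ∂ν with hG
  set S : ℝ≥0∞ := ∑ i ∈ s, G i ^ r with hS
  have hSfin : S ≠ ⊤ := by
    rw [hS]
    exact (ENNReal.sum_lt_top.2 fun i hi =>
      ENNReal.rpow_lt_top_of_nonneg hr0.le (hfin i hi)).ne
  have key : S ≤ S ^ (1 / (r / (r - 1))) * ∫⁻ x, h x ∂ν := by
    have e1 : S = ∑ i ∈ s, ∫⁻ x, G i ^ (r - 1) * g i x ∂ν := by
      refine Finset.sum_congr rfl fun i hi => ?_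
      rw [lintegral_const_mul' _ _
        (ENNReal.rpow_lt_top_of_nonneg (by linarith) (hfin i hi)).ne]
      change G i ^ r = G i ^ (r - 1) * G i
      conv_rhs => rw [← ENNReal.rpow_one (G i), ← ENNReal.rpow_mul, one_mul]
      rw [← ENNReal.rpow_add_of_nonneg _ _ (by linarith) zero_le_one]
      congr 1; ring
    have hT : S ^ (1 / (r / (r - 1))) ≠ ⊤ :=
      (ENNReal.rpow_lt_top_of_nonneg (by positivity) hSfin).ne
    calc S = _ := e1
      _ ≤ ∫⁻ x, ∑ i ∈ s, G i ^ (r - 1) * g i x ∂ν := aux_sum_lintegral_le ν s _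
      _ ≤ ∫⁻ x, S ^ (1 / (r / (r - 1))) * h x ∂ν := by
        refine lintegral_mono fun x => ?_
        refine (ENNReal.inner_le_Lp_mul_Lq s (fun i => G i ^ (r - 1)) (fun i => g i x) hc).trans ?_
        gcongr
        · rw [hS]
          refine le_of_eq (Finset.sum_congr rfl fun i _ => ?_)
          rw [← ENNReal.rpow_mul]
          congr 1
          have : r - 1 ≠ 0 := by linarith
          field_simp
        · refine (ENNReal.rpow_le_rpow (hg x) (by positivity)).trans ?_
          rw [← ENNReal.rpow_mul, mul_one_div_cancel hr0.ne', ENNReal.rpow_one]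
      _ = _ := lintegral_const_mul' _ _ hT
  rcases eq_or_ne S 0 with h0 | h0
  · rw [h0]; exact zero_le
  have hT : S ^ (1 / (r / (r - 1))) ≠ ⊤ :=
      (ENNReal.rpow_lt_top_of_nonneg (by positivity) hSfin).ne
  have hT0 : S ^ (1 / (r / (r - 1))) ≠ 0 := by
    simp [ENNReal.rpow_eq_zero_iff, h0, hSfin]
  have e2 : S = S ^ (1 / (r / (r - 1))) * S ^ (1 / r) := by
    rw [← ENNReal.rpow_add _ _ h0 hSfin]
    have : 1 / (r / (r - 1)) + 1 / r = 1 := by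
      have : r - 1 ≠ 0 := by linarith
      field_simp; ring
    rw [this, ENNReal.rpow_one]
  have h3 : S ^ (1 / r) ≤ ∫⁻ x, h x ∂ν := by
    rw [← ENNReal.mul_le_mul_iff_right hT0 hT, ← e2]; exact key
  calc S = (S ^ (1 / r)) ^ r := by
        rw [← ENNReal.rpow_mul, one_div_mul_cancel hr0.ne', ENNReal.rpow_one]
    _ ≤ _ := ENNReal.rpow_le_rpow h3 hr0.le

lemma aux_superadd (Φ : ℝ → ℝ) (hc : ConvexOn ℝ (Ici 0) Φ) (h0 : Φ 0 = 0)
    {x y : ℝ} (hx : 0 ≤ x) (hy : 0 ≤ y) : Φ x + Φ y ≤ Φ (x + y) := by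
  rcases (add_nonneg hx hy).eq_or_lt with h | h
  · have hx0 : x = 0 := by linarith
    have hy0 : y = 0 := by linarith
    subst hx0 hy0
    simp [h0]
  have key : ∀ z, 0 ≤ z → z ≤ x + y → Φ z ≤ z / (x + y) * Φ (x + y) := by
    intro z hz hz'
    have := hc.2 (show (0:ℝ) ∈ Ici 0 by simp) (show x + y ∈ Ici (0:ℝ) from h.le)
      (show 0 ≤ 1 - z / (x + y) by
        rw [sub_nonneg, div_le_one h]; exact hz') (by positivity : 0 ≤ z / (x + y)) (by ring)
    simp only [smul_eq_mul, mul_zero, zero_add, h0] at this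
    rwa [div_mul_cancel₀ _ h.ne'] at this
  have h1 := key x hx (by linarith)
  have h2 := key y hy (by linarith)
  have : x / (x + y) * Φ (x + y) + y / (x + y) * Φ (x + y) = Φ (x + y) := by
    field_simp
  linarith

lemma aux_superadd_sum {ι : Type*} (Φ : ℝ → ℝ) (hc : ConvexOn ℝ (Ici 0) Φ) (h0 : Φ 0 = 0)
    (s : Finset ι) (F : ι → ℝ) (hF : ∀ i, 0 ≤ F i) :
    ∑ i ∈ s, Φ (F i) ≤ Φ (∑ i ∈ s, F i) := by
  classical
  induction s using Finset.induction_on with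
  | empty => simp [h0]
  | insert i s hi ih =>
    rw [Finset.sum_insert hi, Finset.sum_insert hi]
    have := aux_superadd Φ hc h0 (hF i) (Finset.sum_nonneg fun j _ => hF j : 0 ≤ ∑ j ∈ s, F j)
    linarith

/-- derivative comparison -/
lemma aux_fderiv_le {E : Type*} [NormedAddCommGroup E] [NormedSpace ℝ E] (φ : E → ℝ) (ψ : ℝ → ℝ)
    (K : ℝ) (hK : 0 ≤ K) (hψ : ∀ y z, |ψ y - ψ z| ≤ K * |y - z|) (x : E)
    (hφ : DifferentiableAt ℝ φ x) :
    ‖fderiv ℝ (fun y => ψ (φ y)) x‖ ≤ K * ‖fderiv ℝ φ x‖ := by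
  by_cases hu : DifferentiableAt ℝ (fun y => ψ (φ y)) x
  swap
  · rw [fderiv_zero_of_not_differentiableAt hu]; simp; positivity
  refine ContinuousLinearMap.opNorm_le_bound _ (by positivity) fun v => ?_
  have h1 := ((hu.hasFDerivAt.hasLineDerivAt v).tendsto_slope_zero).norm
  have h2 := (((hφ.hasFDerivAt.hasLineDerivAt v).tendsto_slope_zero).norm).const_mul K
  have h3 : ‖fderiv ℝ (fun y => ψ (φ y)) x v‖ ≤ K * ‖fderiv ℝ φ x v‖ := by
    refine le_of_tendsto_of_tendsto' h1 h2 fun t => ?_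
    rw [norm_smul, norm_smul]
    have := mul_le_mul_of_nonneg_left (hψ (φ (x + (0 + t) • v)) (φ (x + (0:ℝ) • v)))
      (norm_nonneg (t⁻¹))
    simp only [Real.norm_eq_abs] at *
    simp at *
    linarith
  refine h3.trans ?_
  rw [mul_assoc]
  gcongr
  exact ContinuousLinearMap.le_opNorm _ _

/-- decomposition of a dilation invariant integral -/
lemma aux_dyadic (a : ℝ) (ha : 1 < a) (H : ℝ → ℝ≥0∞) (B : ℝ → ℝ≥0∞)
    (hB : ∀ t ∈ Ico 1 a, ∀ s : Finset ℤ,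
      ∑ k ∈ s, ENNReal.ofReal (a ^ k) * H (a ^ k * t) ≤ B t) :
    ∫⁻ t in Ioi (0:ℝ), H t ≤ ∫⁻ t in Ico 1 a, B t := by
  have ha0 : 0 < a := by linarith
  have hU : Ioi (0:ℝ) ⊆ ⋃ k : ℤ, Ico (a ^ k) (a ^ (k + 1)) := by
    intro x hx
    obtain ⟨k, hk⟩ := exists_mem_Ico_zpow hx ha
    exact mem_iUnion.2 ⟨k, hk⟩
  have hk : ∀ k : ℤ, ∫⁻ t in Ico (a ^ k) (a ^ (k + 1)), H t =
      ∫⁻ t in Ico 1 a, ENNReal.ofReal (a ^ k) * H (a ^ k * t) := by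
    intro k
    have hak : 0 < a ^ k := zpow_pos ha0 k
    have := lintegral_image_eq_lintegral_abs_deriv_mul (s := Ico 1 a)
      (f := fun t => a ^ k * t) (f' := fun _ => a ^ k) measurableSet_Ico
      (fun x _ => by simpa using ((hasDerivAt_id x).const_mul (a ^ k)).hasDerivWithinAt)
      (fun x _ y _ h => mul_left_cancel₀ hak.ne' h) H
    rw [abs_of_pos hak] at this
    rw [← this, image_mul_left_Ico hak, mul_one, zpow_add_one₀ ha0.ne']
  calc _ ≤ ∫⁻ t in ⋃ k : ℤ, Ico (a ^ k) (a ^ (k + 1)), H t := lintegral_mono_set hU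
    _ ≤ ∑' k : ℤ, ∫⁻ t in Ico (a ^ k) (a ^ (k + 1)), H t := lintegral_iUnion_le _ _
    _ ≤ _ := by
      rw [ENNReal.tsum_eq_iSup_sum]
      refine iSup_le fun s => ?_
      simp_rw [hk]
      refine (aux_sum_lintegral_le _ s _).trans ?_
      exact setLIntegral_mono' measurableSet_Ico fun t ht => hB t ht s

lemma aux_log (a : ℝ) (ha : 1 < a) (C : ℝ) (hC : 0 ≤ C) :
    ∫⁻ t in Ico 1 a, ENNReal.ofReal (C / t) = ENNReal.ofReal (C * Real.log a) := by
  rw [← ofReal_integral_eq_lintegral_ofReal]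
  · rw [integral_Ico_eq_integral_Ioc, ← intervalIntegral.integral_of_le ha.le]
    simp_rw [div_eq_mul_inv]
    rw [intervalIntegral.integral_const_mul, integral_inv_of_pos one_pos (by linarith), div_one]
  · have : ContinuousOn (fun t : ℝ => C / t) (Icc 1 a) :=
      continuousOn_const.div continuousOn_id fun x hx => by
        have := hx.1
        exact (by linarith : (0:ℝ) < x).ne'
    exact (this.integrableOn_compact isCompact_Icc).mono_set Ico_subset_Icc_self
  · filter_upwards [ae_restrict_mem measurableSet_Ico] with t ht
    have := ht.1
    simp only [Pi.zero_apply]; positivity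

lemma aux_lorentz_pow {α : Type*} [MeasurableSpace α] (μ : Measure α) (p q : ℝ) (hq : 1 ≤ q)
    (f : α → ℝ) : lorentzNorm μ p (ENNReal.ofReal q) f ^ p =
      (ENNReal.ofReal p * ∫⁻ s in Ioi (0 : ℝ),
        ENNReal.ofReal (s ^ (q - 1)) * distribFn μ f s ^ (q / p)) ^ (p / q) := by
  rw [lorentzNorm, if_neg ENNReal.ofReal_ne_top, ENNReal.toReal_ofReal (by linarith),
    ← ENNReal.rpow_mul]
  congr 1; ring

/-- The unnormalised Lorentz functional of the gradient localised on `A`. -/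
noncomputable def auxN {n : ℕ} (Ω : Set (Fin n → ℝ)) (φ : (Fin n → ℝ) → ℝ) (p q : ℝ)
    (A : Set (Fin n → ℝ)) : ℝ≥0∞ :=
  ∫⁻ s in Ioi (0 : ℝ), ENNReal.ofReal (s ^ (q - 1)) *
    (volume.restrict Ω) (A ∩ {x | s < ‖fderiv ℝ φ x‖}) ^ (q / p)

lemma auxN_univ {n : ℕ} (Ω : Set (Fin n → ℝ)) (φ : (Fin n → ℝ) → ℝ) (p q : ℝ) (hq : 1 ≤ q) :
    lorentzNorm (volume.restrict Ω) p (ENNReal.ofReal q) (fun x => ‖fderiv ℝ φ x‖) ^ p =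
      (ENNReal.ofReal p * auxN Ω φ p q univ) ^ (p / q) := by
  rw [aux_lorentz_pow _ _ _ hq]
  simp [auxN, distribFn]

lemma auxN_mono {n : ℕ} (Ω : Set (Fin n → ℝ)) (φ : (Fin n → ℝ) → ℝ) (p q : ℝ)
    (hp : 0 < p) (hq : 0 < q) {A B : Set (Fin n → ℝ)} (h : A ⊆ B) :
    auxN Ω φ p q A ≤ auxN Ω φ p q B := by
  unfold auxN
  gcongr

lemma auxN_ne_top {n : ℕ} (Ω : Set (Fin n → ℝ)) (φ : (Fin n → ℝ) → ℝ) (p q : ℝ)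
    (hp : 0 < p) (hq : 1 ≤ q) {L : NNReal} (hL : LipschitzWith L φ) (hc : HasCompactSupport φ) :
    auxN Ω φ p q univ ≠ ⊤ := by
  have hq0 : 0 < q / p := by positivity
  set C : ℝ≥0∞ := ENNReal.ofReal ((L:ℝ) ^ (q - 1)) * volume (tsupport φ) ^ (q / p) with hC
  have hCt : C ≠ ⊤ := ENNReal.mul_ne_top ENNReal.ofReal_ne_top
    (ENNReal.rpow_lt_top_of_nonneg hq0.le (IsCompact.measure_lt_top hc).ne).ne
  have hle : auxN Ω φ p q univ ≤ ∫⁻ s in Ioi (0:ℝ), (Ioc (0:ℝ) L).indicator (fun _ => C) s := by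
    refine setLIntegral_mono' measurableSet_Ioi fun s hs => ?_
    have hs : 0 < s := hs
    by_cases hsL : s ≤ L
    · rw [indicator_of_mem (show s ∈ Ioc (0:ℝ) L from ⟨hs, hsL⟩)]
      rw [hC]
      refine mul_le_mul' (ENNReal.ofReal_le_ofReal
        (Real.rpow_le_rpow hs.le hsL (by linarith))) (ENNReal.rpow_le_rpow ?_ hq0.le)
      · refine (Measure.restrict_apply_le _ _).trans (measure_mono ?_)
        rintro x ⟨-, hx⟩
        refine support_fderiv_subset ℝ (show fderiv ℝ φ x ≠ 0 from ?_)
        intro h0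
        simp [h0] at hx
        linarith
    · have : {x | s < ‖fderiv ℝ φ x‖} = ∅ := by
        ext x
        simp only [mem_ofPred_eq, mem_empty_iff_false, iff_false, not_lt]
        exact (norm_fderiv_le_of_lipschitz ℝ hL).trans (not_le.1 hsL).le
      rw [this]
      simp [hq0]
  refine (hle.trans_lt ?_).ne
  refine (setLIntegral_le_lintegral _ _).trans_lt ?_
  rw [lintegral_indicator measurableSet_Ioc]
  simp only [lintegral_const, MeasurableSet.univ, Measure.restrict_apply, univ_inter,
    Real.volume_Ioc]
  exact ENNReal.mul_lt_top hCt.lt_top ENNReal.ofReal_lt_top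

lemma auxN_sum {n : ℕ} {ι : Type*} (Ω : Set (Fin n → ℝ)) (φ : (Fin n → ℝ) → ℝ) (p q : ℝ)
    (hp : 0 < p) (hq : 1 ≤ q) (hqp : q ≤ p) (hfin : auxN Ω φ p q univ ≠ ⊤)
    (s : Finset ι) (A : ι → Set (Fin n → ℝ)) (hm : ∀ i, MeasurableSet (A i))
    (hd : Pairwise (Function.onFun Disjoint A)) :
    ∑ i ∈ s, auxN Ω φ p q (A i) ^ (p / q) ≤ auxN Ω φ p q univ ^ (p / q) := by
  have hq0 : 0 < q := by linarith
  refine aux_mink _ s _ _ _ ((one_le_div hq0).2 hqp) (fun t => ?_)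
    (fun i _ => ne_top_of_le_ne_top hfin (auxN_mono Ω φ p q hp hq0 (subset_univ _)))
  have e : ∀ x : ℝ≥0∞, (x ^ (q / p)) ^ (p / q) = x := fun x => by
    rw [← ENNReal.rpow_mul, div_mul_div_cancel₀ hp.ne', div_self hq0.ne', ENNReal.rpow_one]
  simp_rw [ENNReal.mul_rpow_of_nonneg _ _ (show 0 ≤ p / q by positivity), e]
  rw [← Finset.mul_sum]
  gcongr
  set μ := (volume.restrict Ω).restrict {x | t < ‖fderiv ℝ φ x‖} with hμ
  have h := sum_measure_le_measure_univ (μ := μ) (s := s) (t := A)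
    (fun i _ => (hm i).nullMeasurableSet)
    (fun i _ j _ hij => (hd hij).aedisjoint)
  simp only [hμ] at h
  rw [← Measure.restrict_apply MeasurableSet.univ]
  refine le_trans (Finset.sum_le_sum fun i _ => ?_) h
  rw [Measure.restrict_apply (hm i)]

lemma aux_cap {n : ℕ} (p q : ℝ) (hp : 1 < p) (hq : 1 ≤ q) {Ω : Set (Fin n → ℝ)}
    (a : ℝ) (ha : 1 < a) (φ : (Fin n → ℝ) → ℝ) {L : NNReal} (hL : LipschitzWith L φ)
    (hc : HasCompactSupport φ) (hs : tsupport φ ⊆ Ω) (t : ℝ) (ht : 0 < t) :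
    ENNReal.ofReal (t ^ p) * capacitance n p (ENNReal.ofReal q)
      (closure {x | x ∈ Ω ∧ a * t < |φ x|}) {x | x ∈ Ω ∧ t < |φ x|} ≤
    ENNReal.ofReal ((2 / (a - 1)) ^ p) *
      (ENNReal.ofReal p * auxN Ω φ p q {x | t < |φ x| ∧ |φ x| < a * t}) ^ (p / q) := by
  have ha1 : 0 < a - 1 := by linarith
  have hq0 : 0 < q := by linarith
  have hp0 : 0 < p := by linarith
  set d : ℝ := t * (a - 1) / 2 with hd
  set b : ℝ := t + t * (a - 1) / 4 with hb
  have hta : 0 < t * (a - 1) := by positivity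
  have hd0 : 0 < d := by positivity
  have hbt : t < b := by rw [hb]; linarith
  have hbd : b + d < a * t := by rw [hb, hd]; nlinarith
  set ψ : ℝ → ℝ := fun y => min 1 (max 0 ((|y| - b) / d)) with hψdef
  set K : ℝ := 1 / d with hK
  have hK0 : 0 < K := by positivity
  have hψ : ∀ y z, |ψ y - ψ z| ≤ K * |y - z| := by
    intro y z
    have h1 : |ψ y - ψ z| ≤ |(|y| - b) / d - (|z| - b) / d| := by
      refine (abs_min_sub_min_le_max _ _ _ _).trans ?_
      rw [sub_self, abs_zero]
      refine max_le (abs_nonneg _) ?_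
      refine (abs_max_sub_max_le_max _ _ _ _).trans ?_
      rw [sub_self, abs_zero]
      exact max_le (abs_nonneg _) le_rfl
    refine h1.trans ?_
    rw [← sub_div, abs_div, abs_of_pos hd0, hK, one_div, ← div_eq_inv_mul]
    refine div_le_div_of_nonneg_right ?_ hd0.le
    rw [sub_sub_sub_cancel_right]
    exact abs_abs_sub_abs_le_abs_sub y z
  have hψ0 : ∀ y, |y| ≤ b → ψ y = 0 := by
    intro y hy
    have : (|y| - b) / d ≤ 0 := div_nonpos_of_nonpos_of_nonneg (by linarith) hd0.le
    simp [hψdef, max_eq_left this]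
  have hψ1 : ∀ y, b + d ≤ |y| → ψ y = 1 := by
    intro y hy
    have : 1 ≤ (|y| - b) / d := by rw [one_le_div hd0]; linarith
    simp only [hψdef]
    exact min_eq_left (this.trans (le_max_right _ _))
  have hφc : Continuous (fun x => |φ x|) := hL.continuous.abs
  set u : (Fin n → ℝ) → ℝ := fun x => ψ (φ x) with hu
  have hadm : u ∈ admissible (closure {x | x ∈ Ω ∧ a * t < |φ x|}) {x | x ∈ Ω ∧ t < |φ x|} := by
    refine ⟨⟨K.toNNReal * L, ?_⟩, ?_, ?_, ?_⟩
    · have : LipschitzWith K.toNNReal ψ := LipschitzWith.of_dist_le_mul fun y z => by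
        rw [Real.coe_toNNReal _ hK0.le, Real.dist_eq, Real.dist_eq]; exact hψ y z
      exact this.comp hL
    · exact hc.comp_left (g := ψ) (hψ0 0 (by simp; linarith))
    · have h1 : tsupport u ⊆ {x | b ≤ |φ x|} := by
        refine closure_minimal (fun x hx => ?_) (isClosed_le continuous_const hφc)
        by_contra hcon
        exact hx (hψ0 _ (not_le.1 hcon).le)
      intro x hx
      have h2 : b ≤ |φ x| := h1 hx
      have h3 : t < |φ x| := by linarith
      refine ⟨hs (subset_tsupport _ (fun h => ?_)), h3⟩
      rw [h, abs_zero] at h3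
      linarith
    · have h1 : closure {x | x ∈ Ω ∧ a * t < |φ x|} ⊆ {x | a * t ≤ |φ x|} :=
        closure_minimal (fun x hx => hx.2.le) (isClosed_le continuous_const hφc)
      refine h1.trans ?_
      have h2 : {x | b + d < |φ x|} ⊆ interior {x | 1 ≤ u x} :=
        interior_maximal (fun x hx => (hψ1 _ (le_of_lt hx)).ge) (isOpen_lt continuous_const hφc)
      exact fun x hx => h2 (lt_of_lt_of_le hbd hx)
  -- gradient vanishing off the layer
  have hgrad : ∀ x, fderiv ℝ u x ≠ 0 → t < |φ x| ∧ |φ x| < a * t := by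
    intro x hx
    by_contra hcon
    apply hx
    rcases lt_or_ge t |φ x| with h | h
    · have h' : b + d < |φ x| := by
        by_contra h2
        exact hcon ⟨h, by linarith⟩
      have : u =ᶠ[nhds x] fun _ => (1:ℝ) := by
        filter_upwards [(isOpen_lt continuous_const hφc).mem_nhds h'] with y hy
        exact hψ1 _ (le_of_lt hy)
      rw [this.fderiv_eq]; simp
    · have : u =ᶠ[nhds x] fun _ => (0:ℝ) := by
        filter_upwards [(isOpen_lt hφc continuous_const).mem_nhds (lt_of_le_of_lt h hbt)] with y hy
        exact hψ0 _ (le_of_lt hy)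
      rw [this.fderiv_eq]; simp
  set A : Set (Fin n → ℝ) := {x | t < |φ x| ∧ |φ x| < a * t} with hA
  have hdist : ∀ σ, 0 < σ →
      distribFn (volume.restrict {x | x ∈ Ω ∧ t < |φ x|}) (fun x => ‖fderiv ℝ u x‖) (K * σ) ≤
      (volume.restrict Ω) (A ∩ {x | σ < ‖fderiv ℝ φ x‖}) := by
    intro σ hσ
    unfold distribFn
    refine (Measure.restrict_mono (fun x hx => hx.1) le_rfl _).trans ?_
    refine measure_mono_ae ?_
    filter_upwards [ae_restrict_of_ae hL.ae_differentiableAt] with x hx hxs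
    have hxs : K * σ < |‖fderiv ℝ u x‖| := hxs
    rw [abs_norm] at hxs
    refine ⟨hgrad x fun h0 => ?_, ?_⟩
    · rw [h0, norm_zero] at hxs
      have : 0 < K * σ := by positivity
      linarith
    · have := aux_fderiv_le φ ψ K hK0.le hψ x hx
      exact lt_of_mul_lt_mul_left (hxs.trans_le this) hK0.le
  have hscale : ∫⁻ s in Ioi (0 : ℝ), ENNReal.ofReal (s ^ (q - 1)) *
      distribFn (volume.restrict {x | x ∈ Ω ∧ t < |φ x|}) (fun x => ‖fderiv ℝ u x‖) s ^ (q / p) ≤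
      ENNReal.ofReal (K ^ q) * auxN Ω φ p q A := by
    have himg : (fun s => K * s) '' Ioi (0:ℝ) = Ioi 0 := by
      rw [image_mul_left_Ioi hK0, mul_zero]
    have := lintegral_image_eq_lintegral_abs_deriv_mul (s := Ioi (0:ℝ))
      (f := fun t => K * t) (f' := fun _ => K) measurableSet_Ioi
      (fun x _ => by simpa using ((hasDerivAt_id x).const_mul K).hasDerivWithinAt)
      (fun x _ y _ h => mul_left_cancel₀ hK0.ne' h) (fun s => ENNReal.ofReal (s ^ (q - 1)) *
      distribFn (volume.restrict {x | x ∈ Ω ∧ t < |φ x|}) (fun x => ‖fderiv ℝ u x‖) s ^ (q / p))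
    rw [himg] at this
    rw [this, abs_of_pos hK0, auxN, ← lintegral_const_mul' _ _ ENNReal.ofReal_ne_top]
    refine setLIntegral_mono' measurableSet_Ioi fun σ hσ => ?_
    have hσ : 0 < σ := hσ
    rw [← mul_assoc, ← mul_assoc]
    have e : ENNReal.ofReal K * ENNReal.ofReal ((K * σ) ^ (q - 1)) =
        ENNReal.ofReal (K ^ q) * ENNReal.ofReal (σ ^ (q - 1)) := by
      rw [← ENNReal.ofReal_mul hK0.le, ← ENNReal.ofReal_mul (by positivity),
        Real.mul_rpow hK0.le hσ.le, ← mul_assoc, Real.rpow_sub_one hK0.ne']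
      congr 2
      field_simp
    rw [e]
    gcongr
    exact hdist σ hσ
  have hcap : capacitance n p (ENNReal.ofReal q)
      (closure {x | x ∈ Ω ∧ a * t < |φ x|}) {x | x ∈ Ω ∧ t < |φ x|} ≤
      ENNReal.ofReal (K ^ p) * (ENNReal.ofReal p * auxN Ω φ p q A) ^ (p / q) := by
    refine (iInf₂_le u hadm).trans ?_
    rw [aux_lorentz_pow _ _ _ hq]
    have e : ENNReal.ofReal (K ^ p) = ENNReal.ofReal (K ^ q) ^ (p / q) := by
      rw [ENNReal.ofReal_rpow_of_nonneg (by positivity) (by positivity), ← Real.rpow_mul hK0.le,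
        mul_div_cancel₀ _ hq0.ne']
    rw [e, ← ENNReal.mul_rpow_of_nonneg _ _ (by positivity)]
    refine ENNReal.rpow_le_rpow ?_ (by positivity)
    rw [mul_left_comm]
    gcongr
  calc _ ≤ ENNReal.ofReal (t ^ p) * (ENNReal.ofReal (K ^ p) *
        (ENNReal.ofReal p * auxN Ω φ p q A) ^ (p / q)) := by gcongr
    _ = _ := by
      rw [← mul_assoc, ← ENNReal.ofReal_mul (by positivity), ← Real.mul_rpow ht.le hK0.le]
      have e : t * K = 2 / (a - 1) := by rw [hK, hd]; field_simp
      rw [e]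

/-- Conductor inequality with a convex function `Φ`, case `1 ≤ q ≤ p`:
`∫_0^∞ Φ(t^p cap_{p,q}(closure M_{at}, M_t)) dt/t ≤ Φ(c(a,p,q) ‖∇φ‖_{L^{p,q}}^p) · log a`. -/
theorem conductor_inequality_Phi_q_le_p {n : ℕ} (p q : ℝ)
    (hp : 1 < p) (hq : 1 ≤ q) (hqp : q ≤ p)
    {Ω : Set (Fin n → ℝ)} (hΩ : IsOpen Ω)
    (a : ℝ) (ha : 1 < a) :
    ∃ c : ℝ, 0 < c ∧
      ∀ Φ : ℝ → ℝ, MonotoneOn Φ (Ici 0) → ConvexOn ℝ (Ici 0) Φ → Φ 0 = 0 →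
        (∀ x ∈ Ici (0 : ℝ), 0 ≤ Φ x) →
      ∀ φ : (Fin n → ℝ) → ℝ, (∃ L, LipschitzWith L φ) → HasCompactSupport φ →
        tsupport φ ⊆ Ω →
        (∫⁻ t in Ioi (0 : ℝ),
            ENNReal.ofReal
              (Φ (t ^ p *
                (capacitance n p (ENNReal.ofReal q)
                  (closure {x | x ∈ Ω ∧ a * t < |φ x|})
                  {x | x ∈ Ω ∧ t < |φ x|}).toReal) / t)) ≤
          ENNReal.ofReal
            (Φ (c * (lorentzNorm (volume.restrict Ω) p (ENNReal.ofReal q)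
                  (fun x => ‖fderiv ℝ φ x‖)).toReal ^ p) * Real.log a) := by
  have ha0 : 0 < a := by linarith
  have ha1 : 0 < a - 1 := by linarith
  have hq0 : 0 < q := by linarith
  have hp0 : 0 < p := by linarith
  refine ⟨(2 / (a - 1)) ^ p, by positivity, ?_⟩
  rintro Φ hmono hconv hΦ0 hΦnn φ ⟨L, hL⟩ hc hs
  have hN := auxN_ne_top Ω φ p q hp0 hq hL hc
  set R : ℝ≥0∞ := lorentzNorm (volume.restrict Ω) p (ENNReal.ofReal q)
    (fun x => ‖fderiv ℝ φ x‖) with hR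
  have hRp : R ^ p = (ENNReal.ofReal p * auxN Ω φ p q univ) ^ (p / q) :=
    auxN_univ Ω φ p q hq
  have hRt : R ^ p ≠ ⊤ := by
    rw [hRp]
    exact (ENNReal.rpow_lt_top_of_nonneg (by positivity)
      (ENNReal.mul_ne_top ENNReal.ofReal_ne_top hN)).ne
  set cp : ℝ → ℝ≥0∞ := fun t => capacitance n p (ENNReal.ofReal q)
    (closure {x | x ∈ Ω ∧ a * t < |φ x|}) {x | x ∈ Ω ∧ t < |φ x|} with hcp
  set c : ℝ := (2 / (a - 1)) ^ p with hcdef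
  have hc0 : 0 < c := by positivity
  have hRr : c * R.toReal ^ p = (ENNReal.ofReal c * R ^ p).toReal := by
    rw [ENNReal.toReal_mul, ENNReal.toReal_ofReal hc0.le, ENNReal.toReal_rpow]
  have hB0 : 0 ≤ c * R.toReal ^ p := by positivity
  -- the main sum estimate
  have hsum : ∀ t, 0 < t → ∀ s : Finset ℤ,
      ∑ k ∈ s, (a ^ k * t) ^ p * (cp (a ^ k * t)).toReal ≤ c * R.toReal ^ p := by
    intro t ht s
    have hpos : ∀ k : ℤ, 0 < a ^ k * t := fun k => mul_pos (zpow_pos ha0 k) ht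
    have h1 : ∑ k ∈ s, ENNReal.ofReal ((a ^ k * t) ^ p) * cp (a ^ k * t) ≤
        ENNReal.ofReal c * R ^ p := by
      set A : ℤ → Set (Fin n → ℝ) :=
        fun k => {x | a ^ k * t < |φ x| ∧ |φ x| < a * (a ^ k * t)} with hA
      have hφc : Continuous (fun x => |φ x|) := hL.continuous.abs
      have hm : ∀ k, MeasurableSet (A k) := fun k =>
        ((isOpen_lt continuous_const hφc).inter (isOpen_lt hφc continuous_const)).measurableSet
      have hd : Pairwise (Function.onFun Disjoint A) := by
        have hlt : ∀ i j : ℤ, i < j → Disjoint (A i) (A j) := by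
          intro i j hij
          rw [Set.disjoint_left]
          rintro x ⟨-, h2⟩ ⟨h3, -⟩
          have : a ^ (i + 1) ≤ a ^ j := zpow_le_zpow_right₀ ha.le (by omega)
          rw [zpow_add_one₀ ha0.ne'] at this
          have := mul_le_mul_of_nonneg_right this ht.le
          nlinarith
        intro i j hij
        rcases lt_or_gt_of_ne hij with h | h
        · exact hlt i j h
        · exact (hlt j i h).symm
      calc _ ≤ ∑ k ∈ s, ENNReal.ofReal c * (ENNReal.ofReal p * auxN Ω φ p q (A k)) ^ (p / q) :=
            Finset.sum_le_sum fun k _ => aux_cap p q hp hq a ha φ hL hc hs _ (hpos k)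
        _ = ENNReal.ofReal c * (ENNReal.ofReal p ^ (p / q) *
              ∑ k ∈ s, auxN Ω φ p q (A k) ^ (p / q)) := by
            rw [Finset.mul_sum, Finset.mul_sum]
            refine Finset.sum_congr rfl fun k _ => ?_
            rw [ENNReal.mul_rpow_of_nonneg _ _ (by positivity)]
        _ ≤ ENNReal.ofReal c * (ENNReal.ofReal p ^ (p / q) * auxN Ω φ p q univ ^ (p / q)) := by
            gcongr
            exact auxN_sum Ω φ p q hp0 hq hqp hN s A hm hd
        _ = _ := by rw [hRp, ENNReal.mul_rpow_of_nonneg _ _ (by positivity)]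
    have htop : ENNReal.ofReal c * R ^ p ≠ ⊤ := ENNReal.mul_ne_top ENNReal.ofReal_ne_top hRt
    rw [hRr]
    refine le_trans (le_of_eq ?_) (ENNReal.toReal_mono htop h1)
    rw [ENNReal.toReal_sum]
    · refine Finset.sum_congr rfl fun k _ => ?_
      have := hpos k
      rw [ENNReal.toReal_mul, ENNReal.toReal_ofReal (by positivity)]
    · intro k hk
      exact ne_top_of_le_ne_top htop (le_trans (Finset.single_le_sum
        (f := fun k => ENNReal.ofReal ((a ^ k * t) ^ p) * cp (a ^ k * t))
        (fun _ _ => zero_le) hk) h1)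
  have hΦB : 0 ≤ Φ (c * R.toReal ^ p) := hΦnn _ hB0
  rw [← aux_log a ha _ hΦB]
  refine aux_dyadic a ha (fun t => ENNReal.ofReal (Φ (t ^ p * (cp t).toReal) / t)) _ ?_
  intro t ht s
  have ht0 : 0 < t := by linarith [ht.1]
  have hpos : ∀ k : ℤ, 0 < a ^ k * t := fun k => mul_pos (zpow_pos ha0 k) ht0
  have hF : ∀ k : ℤ, 0 ≤ (a ^ k * t) ^ p * (cp (a ^ k * t)).toReal := fun k => by
    have := hpos k
    positivity
  have h2 : ∀ k ∈ s, ENNReal.ofReal (a ^ k) *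
      ENNReal.ofReal (Φ ((a ^ k * t) ^ p * (cp (a ^ k * t)).toReal) / (a ^ k * t)) =
      ENNReal.ofReal (Φ ((a ^ k * t) ^ p * (cp (a ^ k * t)).toReal) / t) := by
    intro k _
    have hak : 0 < a ^ k := zpow_pos ha0 k
    rw [← ENNReal.ofReal_mul hak.le]
    congr 1
    field_simp
  rw [Finset.sum_congr rfl h2, ← ENNReal.ofReal_sum_of_nonneg
    (fun k _ => div_nonneg (hΦnn _ (hF k)) ht0.le), ← Finset.sum_div]
  refine ENNReal.ofReal_le_ofReal ?_
  gcongr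
  refine (aux_superadd_sum Φ hconv hΦ0 s _ hF).trans ?_
  exact hmono (Finset.sum_nonneg fun k _ => hF k) hB0 (hsum t ht0 s)
end

section
/- Let n = 1, 1 < p < ∞, 1 ≤ q ≤ ∞, and A < a ≤ b < B real numbers. There exists a constant C(p,q) ≥ 1 such that C(p,q)^{-1}(σ₁^{1−p} + σ₂^{1−p}) ≤ cap_{p,q}([a,b], (A,B)) ≤ C(p,q)(σ₁^{1−p} + σ₂^{1−p}), where σ₁ = a − A and σ₂ = B − b. -/
open MeasureTheory Set
open scoped ENNReal

/-- The one-dimensional Sobolev–Lorentz `p,q`-capacitance of the conductor `(K, Ω)`,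
`Ω ⊆ ℝ`: the infimum of `‖u'‖_{L^{p,q}(Ω, m₁)}^p` over Lipschitz functions `u`
compactly supported in `Ω` with `u ≥ 1` in a neighborhood of `K`. -/
noncomputable def capacitance1 (p : ℝ) (q : ℝ≥0∞) (K Ω : Set ℝ) : ℝ≥0∞ :=
  ⨅ u ∈ {u : ℝ → ℝ | (∃ c, LipschitzWith c u) ∧ HasCompactSupport u ∧ tsupport u ⊆ Ω ∧
      K ⊆ interior {x | 1 ≤ u x}},
    lorentzNorm (volume.restrict Ω) p q (fun x => |deriv u x|) ^ p


lemma weak_le (p : ℝ) (q : ℝ≥0∞) (hp : 1 < p) (hq : 1 ≤ q) :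
    ∃ K : ℝ, 0 < K ∧ ∀ (μ : Measure ℝ) (f : ℝ → ℝ) (s : ℝ), 0 < s →
      ENNReal.ofReal s * distribFn μ f s ^ (1 / p) ≤ ENNReal.ofReal K * lorentzNorm μ p q f := by
  by_cases hqt : q = ⊤
  · refine ⟨1, one_pos, fun μ f s hs => ?_⟩
    simp only [lorentzNorm, hqt, if_true, ENNReal.ofReal_one, one_mul]
    exact le_iSup (fun s : Ioi (0 : ℝ) => ENNReal.ofReal s.1 * distribFn μ f s.1 ^ (1 / p)) ⟨s, hs⟩
  have hr : 1 ≤ q.toReal := by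
    have := ENNReal.toReal_mono hqt hq
    simpa using this
  set r := q.toReal with hrdef
  have hr0 : 0 < r := by linarith
  have hp0 : 0 < p := by linarith
  refine ⟨(r / p) ^ (1 / r), by positivity, fun μ f s hs => ?_⟩
  simp only [lorentzNorm, hqt, if_false, ← hrdef]
  rw [← ENNReal.ofReal_rpow_of_pos (by positivity), ← ENNReal.mul_rpow_of_nonneg _ _ (by positivity),
    one_div r, ENNReal.le_rpow_inv_iff hr0, ENNReal.mul_rpow_of_nonneg _ _ hr0.le, ← ENNReal.rpow_mul,
    ENNReal.ofReal_rpow_of_pos hs]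
  have h1 : ∫⁻ t in Ioc (0:ℝ) s, ENNReal.ofReal (t ^ (r - 1)) = ENNReal.ofReal (s ^ r / r) := by
    rw [← ofReal_integral_eq_lintegral_ofReal]
    · rw [← intervalIntegral.integral_of_le hs.le, integral_rpow (Or.inl (by linarith))]
      simp [Real.zero_rpow hr0.ne']
    · rw [← IntegrableOn, ← intervalIntegrable_iff_integrableOn_Ioc_of_le hs.le]
      exact intervalIntegral.intervalIntegrable_rpow' (by linarith)
    · filter_upwards [ae_restrict_mem measurableSet_Ioc] with t ht
      exact Real.rpow_nonneg ht.1.le _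
  have h2 : ENNReal.ofReal (s ^ r / r) * distribFn μ f s ^ (r / p) ≤
      ∫⁻ t in Ioi (0:ℝ), ENNReal.ofReal (t ^ (r - 1)) * distribFn μ f t ^ (r / p) := by
    rw [← h1, ← lintegral_mul_const _ (by fun_prop)]
    refine (setLIntegral_mono' measurableSet_Ioc ?_).trans
      (lintegral_mono_set (Ioc_subset_Ioi_self))
    intro t ht
    gcongr
    unfold distribFn
    exact measure_mono fun x hx => lt_of_le_of_lt ht.2 hx
  calc _ = ENNReal.ofReal (r / p) * (ENNReal.ofReal p * (ENNReal.ofReal (s ^ r / r) * distribFn μ f s ^ (r / p))) := by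
        rw [← mul_assoc, ← mul_assoc, ← ENNReal.ofReal_mul (by positivity), ← ENNReal.ofReal_mul (by positivity)]
        congr 2
        · field_simp
        · ring
    _ ≤ _ := by gcongr

lemma lower_core (p σ : ℝ) (hp : 1 < p) (hσ : 0 < σ) (E Ω : Set ℝ) 
    (hEΩ : E ⊆ Ω) (hv : volume E = ENNReal.ofReal σ) (f : ℝ → ℝ) (hf : Measurable f)
    (h1 : 1 ≤ ∫⁻ x in E, ENNReal.ofReal |f x|) (M : ℝ≥0∞)
    (hM : ∀ s : ℝ, 0 < s → ENNReal.ofReal s * distribFn (volume.restrict Ω) f s ^ (1 / p) ≤ M) :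
    ENNReal.ofReal ((p - 1) / 2 * (2 * σ) ^ (1 - p)) ≤ M ^ p := by
  have hp0 : 0 < p := by linarith
  have hp1 : 0 < p - 1 := by linarith
  have hT : 0 < (2 * σ)⁻¹ := by positivity
  set T := (2 * σ)⁻¹ with hTdef
  have hd : ∀ s : ℝ, 0 < s → (volume.restrict E) {x | s < |f x|} ≤ M ^ p * ENNReal.ofReal (s ^ (-p)) := by
    intro s hs
    have h := ENNReal.rpow_le_rpow (hM s hs) hp0.le
    rw [ENNReal.mul_rpow_of_nonneg _ _ hp0.le, ← ENNReal.rpow_mul, one_div, inv_mul_cancel₀ hp0.ne',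
      ENNReal.rpow_one, ENNReal.ofReal_rpow_of_pos hs] at h
    calc (volume.restrict E) {x | s < |f x|} ≤ distribFn (volume.restrict Ω) f s := 
          Measure.restrict_mono_set volume hEΩ _
      _ = (ENNReal.ofReal (s ^ p) * distribFn (volume.restrict Ω) f s) * ENNReal.ofReal (s ^ (-p)) := by
          rw [mul_right_comm, ← ENNReal.ofReal_mul (by positivity), ← Real.rpow_add hs]
          simp
      _ ≤ _ := by gcongr
  rw [lintegral_eq_lintegral_meas_lt _ (ae_of_all _ fun x => abs_nonneg _) (by fun_prop),
    ← Ioc_union_Ioi_eq_Ioi hT.le] at h1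
  have h2 := h1.trans (lintegral_union_le _ _ _)
  have h3 : ∫⁻ s in Ioc 0 T, (volume.restrict E) {x | s < |f x|} ≤ ENNReal.ofReal (1 / 2) := by
    calc _ ≤ ∫⁻ s in Ioc 0 T, ENNReal.ofReal σ := by
          refine lintegral_mono fun s => ?_
          rw [← hv]
          exact (measure_mono (subset_univ _)).trans (by simp)
      _ = _ := by
          rw [setLIntegral_const, Real.volume_Ioc, ← ENNReal.ofReal_mul hσ.le]
          congr 1
          rw [hTdef]; field_simp; ring
  have h4 : ∫⁻ s in Ioi T, (volume.restrict E) {x | s < |f x|} ≤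
      M ^ p * ENNReal.ofReal ((2 * σ) ^ (p - 1) / (p - 1)) := by
    calc _ ≤ ∫⁻ s in Ioi T, M ^ p * ENNReal.ofReal (s ^ (-p)) :=
          setLIntegral_mono' measurableSet_Ioi fun s hs => hd s (hT.trans hs)
      _ = _ := by
          rw [lintegral_const_mul _ (by fun_prop), ← ofReal_integral_eq_lintegral_ofReal
            (integrableOn_Ioi_rpow_of_lt (by linarith) hT)
            (by filter_upwards [ae_restrict_mem measurableSet_Ioi] with t ht
                exact Real.rpow_nonneg (hT.trans ht).le _),
            integral_Ioi_rpow_of_lt (by linarith) hT, hTdef, Real.inv_rpow (by positivity),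
            ← Real.rpow_neg (by positivity)]
          congr 2
          rw [show -(-p + 1) = p - 1 by ring, show -p + 1 = -(p - 1) by ring, neg_div_neg_eq]
  have h5 := h2.trans (add_le_add h3 h4)
  set K := (2 * σ) ^ (p - 1) / (p - 1) with hK
  have hK0 : 0 < K := by positivity
  have h6 : ENNReal.ofReal (1 / 2) ≤ M ^ p * ENNReal.ofReal K := by
    have : (1 : ℝ≥0∞) = ENNReal.ofReal (1 / 2) + ENNReal.ofReal (1 / 2) := by
      rw [← ENNReal.ofReal_add (by norm_num) (by norm_num)]; norm_num
    rw [this] at h5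
    exact (ENNReal.add_le_add_iff_left ENNReal.ofReal_ne_top).1 h5
  have h7 := ENNReal.div_le_of_le_mul h6
  rw [← ENNReal.ofReal_div_of_pos hK0] at h7
  refine le_trans (le_of_eq ?_) h7
  congr 1
  rw [hK, show 1 - p = -(p - 1) by ring, Real.rpow_neg (by positivity)]
  field_simp

lemma one_le_lint (u : ℝ → ℝ) (c : NNReal) (hu : LipschitzWith c u) (x y : ℝ) (hxy : x ≤ y)
    (h : 1 ≤ |u y - u x|) : 1 ≤ ∫⁻ t in Ioc x y, ENNReal.ofReal |(fun x => |deriv u x|) t| := by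
  have h1 := (hu.lipschitzOnWith (s := uIcc x y)).absolutelyContinuousOnInterval.integral_deriv_eq_sub
  rw [intervalIntegral.integral_of_le hxy] at h1
  rw [← h1, ← Real.norm_eq_abs] at h
  calc (1 : ℝ≥0∞) = ENNReal.ofReal 1 := by simp
    _ ≤ ENNReal.ofReal ‖∫ t in Ioc x y, deriv u t‖ := ENNReal.ofReal_le_ofReal h
    _ = ‖∫ t in Ioc x y, deriv u t‖ₑ := ofReal_norm _
    _ ≤ ∫⁻ t in Ioc x y, ‖deriv u t‖ₑ := enorm_integral_le_lintegral_enorm _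
    _ = _ := by
      refine lintegral_congr fun t => ?_
      simp [← ofReal_norm]

lemma lower_bound (p : ℝ) (q : ℝ≥0∞) (hp : 1 < p) (hq : 1 ≤ q) :
    ∃ c : ℝ, 0 < c ∧ ∀ A a b B : ℝ, A < a → a ≤ b → b < B →
        ENNReal.ofReal (c * ((a - A) ^ (1 - p) + (B - b) ^ (1 - p))) ≤
          capacitance1 p q (Icc a b) (Ioo A B) := by
  obtain ⟨K, hK, hw⟩ := weak_le p q hp hq
  have hp0 : 0 < p := by linarith
  have hp1 : 0 < p - 1 := by linarith
  refine ⟨(p - 1) / 2 * 2 ^ (1 - p) / K ^ p / 2, by positivity, fun A a b B hA hab hB => ?_⟩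
  unfold capacitance1
  refine le_iInf₂ fun u hu => ?_
  obtain ⟨⟨c, hc⟩, -, hsupp, hone⟩ := hu
  have h0 : ∀ x, x ∉ Ioo A B → u x = 0 := fun x hx => by
    by_contra h
    exact hx (hsupp (subset_tsupport _ h))
  have h1 : ∀ x ∈ Icc a b, 1 ≤ u x := fun x hx => by
    have := interior_subset (hone hx)
    exact this
  set N := lorentzNorm (volume.restrict (Ioo A B)) p q (fun x => |deriv u x|) with hN
  have key : ∀ x y σ : ℝ, x < y → y - x = σ → Ioo x y ⊆ Ioo A B → 1 ≤ |u y - u x| → 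
      ENNReal.ofReal ((p - 1) / 2 * 2 ^ (1 - p) / K ^ p * σ ^ (1 - p)) ≤ N ^ p := by
    intro x y σ hxy hσ hsub hu1
    have hσ0 : 0 < σ := by linarith
    have h := lower_core p σ hp hσ0 (Ioo x y) (Ioo A B) hsub (by rw [Real.volume_Ioo, hσ])
      (fun x => |deriv u x|) (by fun_prop) 
      (by rw [restrict_Ioo_eq_restrict_Ioc]; exact one_le_lint u c hc x y hxy.le hu1) _
      (fun s hs => hw (volume.restrict (Ioo A B)) (fun x => |deriv u x|) s hs)
    rw [ENNReal.mul_rpow_of_nonneg _ _ hp0.le, ENNReal.ofReal_rpow_of_pos hK,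
      mul_comm (ENNReal.ofReal (K ^ p))] at h
    have h' := ENNReal.div_le_of_le_mul h
    rw [← ENNReal.ofReal_div_of_pos (by positivity)] at h'
    refine le_trans (le_of_eq ?_) h'
    congr 1
    rw [Real.mul_rpow (by norm_num) hσ0.le]
    ring
  have k1 := key A a _ hA rfl (Ioo_subset_Ioo le_rfl (by linarith)) (by
    rw [h0 A (by simp), sub_zero]
    exact (h1 a ⟨le_rfl, hab⟩).trans (le_abs_self _))
  have k2 := key b B _ hB rfl (Ioo_subset_Ioo (by linarith) le_rfl) (by
    rw [h0 B (by simp), zero_sub, abs_neg]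
    exact (h1 b ⟨hab, le_rfl⟩).trans (le_abs_self _))
  set D := (p - 1) / 2 * 2 ^ (1 - p) / K ^ p with hD
  have hD0 : 0 < D := by positivity
  rcases le_total ((a - A) ^ (1 - p)) ((B - b) ^ (1 - p)) with h | h
  · refine le_trans (ENNReal.ofReal_le_ofReal ?_) k2
    nlinarith
  · refine le_trans (ENNReal.ofReal_le_ofReal ?_) k1
    nlinarith

lemma add_rpow_le_aux (x y : ℝ≥0∞) (r : ℝ) (hr : 0 ≤ r) :
    (x + y) ^ r ≤ 2 ^ r * (x ^ r + y ^ r) := by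
  have h : x + y ≤ 2 * max x y := by
    rw [two_mul]; exact add_le_add (le_max_left _ _) (le_max_right _ _)
  refine (ENNReal.rpow_le_rpow h hr).trans ?_
  rw [ENNReal.mul_rpow_of_nonneg _ _ hr]
  gcongr
  rcases le_total x y with h | h
  · rw [max_eq_right h]; exact le_add_self
  · rw [max_eq_left h]; exact le_self_add

lemma upper_core (p : ℝ) (q : ℝ≥0∞) (hp : 1 < p) (hq : 1 ≤ q) :
    ∃ K : ℝ, 0 < K ∧ ∀ (μ : Measure ℝ) (f : ℝ → ℝ) (σ τ : ℝ), 0 < σ → 0 < τ →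
      (∀ s : ℝ, 0 < s → distribFn μ f s ≤ (Iio (2 / σ)).indicator (fun _ => ENNReal.ofReal σ) s +
        (Iio (2 / τ)).indicator (fun _ => ENNReal.ofReal τ) s) →
      lorentzNorm μ p q f ≤
        ENNReal.ofReal K * (ENNReal.ofReal (σ ^ (1 / p - 1)) + ENNReal.ofReal (τ ^ (1 / p - 1))) := by
  have hp0 : 0 < p := by linarith
  by_cases hqt : q = ⊤
  · refine ⟨2, two_pos, fun μ f σ τ hσ hτ h => ?_⟩
    simp only [lorentzNorm, hqt, if_true]
    refine iSup_le fun ⟨s, hs⟩ => ?_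
    have hs : 0 < s := hs
    have key : ∀ σ : ℝ, 0 < σ → ENNReal.ofReal s * ((Iio (2 / σ)).indicator (fun _ => ENNReal.ofReal σ) s) ^ (1 / p) ≤ ENNReal.ofReal 2 * ENNReal.ofReal (σ ^ (1 / p - 1)) := by
      intro σ hσ
      by_cases h : s ∈ Iio (2 / σ)
      · rw [indicator_of_mem h, ENNReal.ofReal_rpow_of_pos hσ, ← ENNReal.ofReal_mul hs.le,
          ← ENNReal.ofReal_mul (by norm_num), Real.rpow_sub_one hσ.ne']
        refine ENNReal.ofReal_le_ofReal ?_
        have h : s < 2 / σ := h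
        calc s * σ ^ (1 / p) ≤ 2 / σ * σ ^ (1 / p) := by gcongr
          _ = _ := by ring
      · rw [indicator_of_notMem h, ENNReal.zero_rpow_of_pos (by positivity)]; simp
    calc _ ≤ ENNReal.ofReal s * (_ + _) := by
          gcongr
          exact (ENNReal.rpow_le_rpow (h s hs) (by positivity)).trans
            (ENNReal.rpow_add_le_add_rpow _ _ (by positivity) ((div_le_one hp0).2 hp.le))
      _ ≤ _ := by
          rw [mul_add, mul_add]
          exact add_le_add (key σ hσ) (key τ hτ)
  have hr : 1 ≤ q.toReal := by
    have := ENNReal.toReal_mono hqt hq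
    simpa using this
  set r := q.toReal with hrdef
  have hr0 : 0 < r := by linarith
  refine ⟨(p * 2 ^ (r / p) * (2 ^ r / r)) ^ (1 / r), by positivity, fun μ f σ τ hσ hτ h => ?_⟩
  simp only [lorentzNorm, hqt, if_false, ← hrdef]
  have key : ∀ σ : ℝ, 0 < σ → ∫⁻ s in Ioi (0:ℝ), ENNReal.ofReal (s ^ (r - 1)) * ((Iio (2 / σ)).indicator (fun _ => ENNReal.ofReal σ) s) ^ (r / p) ≤ ENNReal.ofReal (2 ^ r / r * (σ ^ (1 / p - 1)) ^ r) := by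
    intro σ hσ
    have h2 : 0 < 2 / σ := by positivity
    have h1 : ∫⁻ t in Ioc (0:ℝ) (2 / σ), ENNReal.ofReal (t ^ (r - 1)) = ENNReal.ofReal ((2 / σ) ^ r / r) := by
      rw [← ofReal_integral_eq_lintegral_ofReal]
      · rw [← intervalIntegral.integral_of_le h2.le, integral_rpow (Or.inl (by linarith))]
        simp [Real.zero_rpow hr0.ne']
      · rw [← IntegrableOn, ← intervalIntegrable_iff_integrableOn_Ioc_of_le h2.le]
        exact intervalIntegral.intervalIntegrable_rpow' (by linarith)
      · filter_upwards [ae_restrict_mem measurableSet_Ioc] with t ht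
        exact Real.rpow_nonneg ht.1.le _
    calc _ ≤ ∫⁻ s in Ioi (0:ℝ), (Ioc 0 (2 / σ)).indicator (fun s => ENNReal.ofReal (s ^ (r - 1)) * ENNReal.ofReal (σ ^ (r / p))) s := by
          refine setLIntegral_mono' measurableSet_Ioi fun s hs => ?_
          by_cases h : s ∈ Iio (2 / σ)
          · rw [indicator_of_mem h, indicator_of_mem (show s ∈ Ioc 0 (2 / σ) from ⟨hs, le_of_lt h⟩), ENNReal.ofReal_rpow_of_pos hσ]
          · rw [indicator_of_notMem h, ENNReal.zero_rpow_of_pos (by positivity)]; simp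
      _ ≤ ∫⁻ s, (Ioc 0 (2 / σ)).indicator (fun s => ENNReal.ofReal (s ^ (r - 1)) * ENNReal.ofReal (σ ^ (r / p))) s := setLIntegral_le_lintegral _ _
      _ = ENNReal.ofReal ((2 / σ) ^ r / r) * ENNReal.ofReal (σ ^ (r / p)) := by
          rw [lintegral_indicator measurableSet_Ioc, lintegral_mul_const _ (by fun_prop), h1]
      _ = _ := by
          rw [← ENNReal.ofReal_mul (by positivity), Real.div_rpow (by norm_num) hσ.le,
            ← Real.rpow_mul hσ.le, show (1 / p - 1) * r = r / p - r by ring, Real.rpow_sub hσ]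
          congr 1
          ring
  have hI : ∫⁻ s in Ioi (0 : ℝ), ENNReal.ofReal (s ^ (r - 1)) * distribFn μ f s ^ (r / p) ≤
      2 ^ (r / p) * (ENNReal.ofReal (2 ^ r / r * (σ ^ (1 / p - 1)) ^ r) + ENNReal.ofReal (2 ^ r / r * (τ ^ (1 / p - 1)) ^ r)) := by
    refine le_trans ?_ (mul_le_mul_right (add_le_add (key σ hσ) (key τ hτ)) _)
    have hm : ∀ σ : ℝ, Measurable fun s : ℝ => ENNReal.ofReal (s ^ (r - 1)) * ((Iio (2 / σ)).indicator (fun _ => ENNReal.ofReal σ) s) ^ (r / p) := by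
      intro σ
      have : Measurable ((Iio (2 / σ)).indicator (fun _ => ENNReal.ofReal σ)) := measurable_const.indicator measurableSet_Iio
      fun_prop
    rw [← lintegral_add_left (hm σ), ← lintegral_const_mul _ (by exact (hm σ).add (hm τ))]
    refine setLIntegral_mono' measurableSet_Ioi fun s hs => ?_
    rw [← mul_add, mul_left_comm]
    gcongr
    exact (ENNReal.rpow_le_rpow (h s hs) (by positivity)).trans (add_rpow_le_aux _ _ _ (by positivity))
  have e2 : (2 : ℝ≥0∞) ^ (r / p) = ENNReal.ofReal (2 ^ (r / p)) := by
    rw [← ENNReal.ofReal_rpow_of_pos two_pos]; simp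
  calc _ ≤ (ENNReal.ofReal ((p * 2 ^ (r / p) * (2 ^ r / r)) * (σ ^ (1 / p - 1)) ^ r) + ENNReal.ofReal ((p * 2 ^ (r / p) * (2 ^ r / r)) * (τ ^ (1 / p - 1)) ^ r)) ^ (1 / r) := by
        gcongr
        refine (mul_le_mul_right hI _).trans (le_of_eq ?_)
        rw [e2, ← mul_assoc, mul_add, ← ENNReal.ofReal_mul hp0.le, ← ENNReal.ofReal_mul (by positivity), ← ENNReal.ofReal_mul (by positivity)]
        congr 2 <;> ring
    _ ≤ _ := ENNReal.rpow_add_le_add_rpow _ _ (by positivity) ((div_le_one hr0).2 hr)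
    _ = _ := by
        have e : ∀ σ : ℝ, 0 < σ → ((p * 2 ^ (r / p) * (2 ^ r / r)) * (σ ^ (1 / p - 1)) ^ r) ^ (1 / r) =
            (p * 2 ^ (r / p) * (2 ^ r / r)) ^ (1 / r) * σ ^ (1 / p - 1) := by
          intro σ hσ
          rw [Real.mul_rpow (by positivity) (by positivity), one_div r,
            Real.rpow_rpow_inv (by positivity) hr0.ne']
        rw [mul_add, ← ENNReal.ofReal_mul (by positivity), ← ENNReal.ofReal_mul (by positivity),
          ENNReal.ofReal_rpow_of_pos (by positivity), ENNReal.ofReal_rpow_of_pos (by positivity),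
          e σ hσ, e τ hτ]

lemma lip_clamp (k m σ : ℝ) (hσ : 0 < σ) (hk : |k| = 2 / σ) :
    LipschitzWith (Real.toNNReal (2 / σ)) (fun x : ℝ => max 0 (min 1 (k * x + m))) := by
  refine LipschitzWith.const_max (LipschitzWith.const_min ?_ _) _
  refine LipschitzWith.of_dist_le_mul fun x y => ?_
  rw [Real.coe_toNNReal _ (by positivity), Real.dist_eq, Real.dist_eq, ← hk, ← abs_mul]
  apply le_of_eq; congr 1; ring

lemma upper_bound (p : ℝ) (q : ℝ≥0∞) (hp : 1 < p) (hq : 1 ≤ q) :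
    ∃ c : ℝ, 0 < c ∧ ∀ A a b B : ℝ, A < a → a ≤ b → b < B →
        capacitance1 p q (Icc a b) (Ioo A B) ≤
        ENNReal.ofReal (c * ((a - A) ^ (1 - p) + (B - b) ^ (1 - p))) := by
  obtain ⟨K, hK, hw⟩ := upper_core p q hp hq
  have hp0 : 0 < p := by linarith
  refine ⟨K ^ p * 2 ^ p, by positivity, fun A a b B hA hab hB => ?_⟩
  obtain ⟨σ, hσ⟩ : ∃ σ, σ = a - A := ⟨_, rfl⟩
  obtain ⟨τ, hτ⟩ : ∃ τ, τ = B - b := ⟨_, rfl⟩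
  have hσ0 : 0 < σ := by linarith
  have hτ0 : 0 < τ := by linarith
  rw [← hσ, ← hτ]
  have hLd : ∀ x, 2 / σ * x + (-(2 / σ * A) - 1 / 2) = (2 * (x - A) - σ / 2) / σ := by
    intro x; field_simp; ring
  have hRd : ∀ x, -(2 / τ) * x + (2 / τ * B - 1 / 2) = (2 * (B - x) - τ / 2) / τ := by
    intro x; field_simp; ring
  set L : ℝ → ℝ := fun x => 2 / σ * x + (-(2 / σ * A) - 1 / 2) with hL
  set R : ℝ → ℝ := fun x => -(2 / τ) * x + (2 / τ * B - 1 / 2) with hR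
  have lipL : LipschitzWith (Real.toNNReal (2 / σ)) (fun x => max 0 (min 1 (L x))) :=
    lip_clamp _ _ σ hσ0 (abs_of_pos (by positivity))
  have lipR : LipschitzWith (Real.toNNReal (2 / τ)) (fun x => max 0 (min 1 (R x))) :=
    lip_clamp _ _ τ hτ0 (by rw [abs_neg]; exact abs_of_pos (by positivity))
  have L1 : ∀ x, a - σ / 4 ≤ x → 1 ≤ L x := fun x hx => by
    simp only [hL, hLd]; rw [le_div_iff₀ hσ0]; linarith
  have R1 : ∀ x, x ≤ b + τ / 4 → 1 ≤ R x := fun x hx => by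
    simp only [hR, hRd]; rw [le_div_iff₀ hτ0]; linarith
  have L0 : ∀ x, x ≤ A + σ / 4 → L x ≤ 0 := fun x hx => by
    simp only [hL, hLd]; exact div_nonpos_of_nonpos_of_nonneg (by linarith) hσ0.le
  have R0 : ∀ x, B - τ / 4 ≤ x → R x ≤ 0 := fun x hx => by
    simp only [hR, hRd]; exact div_nonpos_of_nonpos_of_nonneg (by linarith) hτ0.le
  set u : ℝ → ℝ := fun x => min (max 0 (min 1 (L x))) (max 0 (min 1 (R x))) with hu
  have uL : ∀ x, x ≤ b + τ / 4 → u x = max 0 (min 1 (L x)) := fun x hx => by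
    simp only [hu]; rw [min_eq_left (R1 x hx)]; simp
  have uR : ∀ x, a - σ / 4 ≤ x → u x = max 0 (min 1 (R x)) := fun x hx => by
    simp only [hu]; rw [min_eq_left (L1 x hx)]; simp
  have uone : ∀ x ∈ Ioo (a - σ / 4) (b + τ / 4), u x = 1 := fun x hx => by
    rw [uL x hx.2.le, min_eq_left (L1 x hx.1.le)]; simp
  have hsupp : tsupport u ⊆ Icc (A + σ / 4) (B - τ / 4) := by
    refine closure_minimal (fun x hx => ?_) isClosed_Icc
    by_contra hn
    apply hx
    rw [mem_Icc, not_and_or, not_le, not_le] at hn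
    rcases hn with h | h
    · have := L0 x h.le
      simp only [hu]; rw [max_eq_left ((min_le_right _ _).trans this)]
      exact min_eq_left (le_max_left _ _)
    · have := R0 x h.le
      simp only [hu]; rw [max_eq_left (b := min 1 (R x)) ((min_le_right _ _).trans this)]
      exact min_eq_right (le_max_left _ _)
  have hadm : u ∈ {u : ℝ → ℝ | (∃ c, LipschitzWith c u) ∧ HasCompactSupport u ∧ tsupport u ⊆ Ioo A B ∧
      Icc a b ⊆ interior {x | 1 ≤ u x}} := by
    refine ⟨⟨_, lipL.min lipR⟩, isCompact_Icc.of_isClosed_subset (isClosed_tsupport _) hsupp,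
      hsupp.trans fun x hx => ⟨by linarith [hx.1], by linarith [hx.2]⟩, ?_⟩
    refine Subset.trans (fun x hx => ?_) (interior_maximal (fun x hx => ?_) (isOpen_Ioo (a := a - σ / 4) (b := b + τ / 4)))
    · exact ⟨by linarith [hx.1], by linarith [hx.2]⟩
    · exact (uone x hx).ge
  unfold capacitance1
  refine (iInf₂_le u hadm).trans ?_
  have hdist : ∀ s : ℝ, 0 < s → distribFn (volume.restrict (Ioo A B)) (fun x => |deriv u x|) s ≤
      (Iio (2 / σ)).indicator (fun _ => ENNReal.ofReal σ) s +
        (Iio (2 / τ)).indicator (fun _ => ENNReal.ofReal τ) s := by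
    intro s hs
    have hsub : {x | s < |(fun x => |deriv u x|) x|} ∩ Ioo A B ⊆
        {x | x ∈ Ioo A a ∧ s < 2 / σ} ∪ {x | x ∈ Ioo b B ∧ s < 2 / τ} := by
      rintro x ⟨hx, hxA, hxB⟩
      simp only [abs_abs, mem_setOf_eq] at hx
      rcases lt_or_ge x a with h | h
      · left
        refine ⟨⟨hxA, h⟩, hx.trans_le ?_⟩
        have he : u =ᶠ[nhds x] (fun x => max 0 (min 1 (L x))) := by
          filter_upwards [Iio_mem_nhds (show x < b + τ / 4 by linarith)] with y hy
          exact uL y (le_of_lt hy)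
        rw [he.deriv_eq]
        have := norm_deriv_le_of_lipschitz (x₀ := x) lipL
        rwa [Real.coe_toNNReal _ (by positivity)] at this
      rcases lt_or_ge b x with h' | h'
      · right
        refine ⟨⟨h', hxB⟩, hx.trans_le ?_⟩
        have he : u =ᶠ[nhds x] (fun x => max 0 (min 1 (R x))) := by
          filter_upwards [Ioi_mem_nhds (show a - σ / 4 < x by linarith)] with y hy
          exact uR y (le_of_lt hy)
        rw [he.deriv_eq]
        have := norm_deriv_le_of_lipschitz (x₀ := x) lipR
        rwa [Real.coe_toNNReal _ (by positivity)] at this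
      · exfalso
        have he : u =ᶠ[nhds x] (fun x => 1) := by
          filter_upwards [Ioo_mem_nhds (show a - σ / 4 < x by linarith) (show x < b + τ / 4 by linarith)] with y hy
          exact uone y hy
        rw [he.deriv_eq] at hx
        simp at hx
        linarith
    unfold distribFn
    rw [Measure.restrict_apply' measurableSet_Ioo]
    refine (measure_mono hsub).trans ((measure_union_le _ _).trans (add_le_add ?_ ?_))
    · by_cases h : s < 2 / σ
      · rw [indicator_of_mem (show s ∈ Iio (2 / σ) from h), hσ, ← Real.volume_Ioo]
        exact measure_mono fun x hx => hx.1
      · simp [h]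
    · by_cases h : s < 2 / τ
      · rw [indicator_of_mem (show s ∈ Iio (2 / τ) from h), hτ, ← Real.volume_Ioo]
        exact measure_mono fun x hx => hx.1
      · simp [h]
  have hfin := ENNReal.rpow_le_rpow (hw _ _ σ τ hσ0 hτ0 hdist) hp0.le
  refine hfin.trans ?_
  rw [ENNReal.mul_rpow_of_nonneg _ _ hp0.le]
  refine (mul_le_mul_right (add_rpow_le_aux _ _ _ hp0.le) _).trans (le_of_eq ?_)
  have e2 : (2 : ℝ≥0∞) ^ p = ENNReal.ofReal (2 ^ p) := by
    rw [← ENNReal.ofReal_rpow_of_pos two_pos]; simp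
  have e3 : ∀ σ : ℝ, 0 < σ → ENNReal.ofReal (σ ^ (1 / p - 1)) ^ p = ENNReal.ofReal (σ ^ (1 - p)) := by
    intro σ hσ
    rw [ENNReal.ofReal_rpow_of_pos (by positivity), ← Real.rpow_mul hσ.le]
    congr 2
    field_simp
  rw [e2, e3 σ hσ0, e3 τ hτ0, ENNReal.ofReal_rpow_of_pos hK, ← ENNReal.ofReal_add (by positivity) (by positivity),
    ← ENNReal.ofReal_mul (by positivity), ← ENNReal.ofReal_mul (by positivity), mul_assoc]

/-- Sharp two-sided estimate for the `p,q`-capacitance of the conductor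
`([a,b], (A,B))` in terms of `σ₁ = a − A` and `σ₂ = B − b`. -/
theorem capacitance_interval_estimate (p : ℝ) (q : ℝ≥0∞) (hp : 1 < p) (hq : 1 ≤ q) :
    ∃ C : ℝ, 1 ≤ C ∧
      ∀ A a b B : ℝ, A < a → a ≤ b → b < B →
        ENNReal.ofReal (C⁻¹ * ((a - A) ^ (1 - p) + (B - b) ^ (1 - p))) ≤
          capacitance1 p q (Icc a b) (Ioo A B) ∧
        capacitance1 p q (Icc a b) (Ioo A B) ≤
          ENNReal.ofReal (C * ((a - A) ^ (1 - p) + (B - b) ^ (1 - p))) := by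
  obtain ⟨c, hc, hlow⟩ := lower_bound p q hp hq
  obtain ⟨d, hd, hup⟩ := upper_bound p q hp hq
  refine ⟨max 1 (max c⁻¹ d), le_max_left _ _, fun A a b B hA hab hB => ?_⟩
  have hS : 0 ≤ (a - A) ^ (1 - p) + (B - b) ^ (1 - p) :=
    add_nonneg (Real.rpow_nonneg (by linarith) _) (Real.rpow_nonneg (by linarith) _)
  constructor
  · refine le_trans (ENNReal.ofReal_le_ofReal (mul_le_mul_of_nonneg_right ?_ hS))
      (hlow A a b B hA hab hB)
    exact inv_le_of_inv_le₀ hc ((le_max_left _ _).trans (le_max_right _ _))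
  · refine (hup A a b B hA hab hB).trans
      (ENNReal.ofReal_le_ofReal (mul_le_mul_of_nonneg_right ?_ hS))
    exact (le_max_right _ _).trans (le_max_right _ _)
end
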